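/- (Theorem 2.) Let d ≥ 1, let w ∈ ℝ^d with w ≠ 0, b ∈ ℝ, ε > 0, δ ≥ 0, and consider balanced Gaussian mixture data with means μ₊, μ₋ and σ > 0, with μ = (μ₊ − μ₋)/2 ≠ 0 and μ₀ = μ/‖μ‖₂. Assume w·μ₀ ≥ 0 and set cos θ = (w·μ₀)/‖w‖₂, sin θ = √(1 − cos²θ), β = min(ε cos θ, δ), and g(ε, δ, θ) = β cos θ + √(ε² − β²) sin θ. Define the overall strong-adversarial rate p_{s-adv} = (1/2)·P_{N(μ₊,σ²I_d)}({x : w·x + b > 0 and there exists v with ‖v‖₂ ≤ ε, |v·μ₀| ≤ δ, and w·(x+v) + b ≤ 0}) + (1/2)·P_{N(μ₋,σ²I_d)}({x : w·x + b ≤ 0 and there exists v with ‖v‖₂ ≤ ε, |v·μ₀| ≤ δ, and w·(x+v) + b > 0}). Then p_{s-adv} = 1 − p_m − (1/2)[Φ((w·μ + b')/(‖w‖₂σ) − g(ε,δ,θ)/σ) + Φ((w·μ − b')/(‖w‖₂σ) − g(ε,δ,θ)/σ)], where p_m = 1 − (1/2)[Φ((w·μ + b')/(‖w‖₂σ)) +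 Φ((w·μ − b')/(‖w‖₂σ))]. -/

import Mathlib

open MeasureTheory ProbabilityTheory
open scoped ENNReal NNReal

/-- Euclidean inner product on `ℝ^d`. -/
noncomputable def dotp {d : ℕ} (w x : Fin d → ℝ) : ℝ := ∑ i, w i * x i

/-- The `ℓ₂` norm on `ℝ^d`. -/
noncomputable def l2 {d : ℕ} (w : Fin d → ℝ) : ℝ := Real.sqrt (∑ i, (w i)^2)

/-- The product Gaussian measure `N(m, σ²I_d)` on `ℝ^d`. -/
noncomputable def gaussPi {d : ℕ} (m : Fin d → ℝ) (σ : ℝ) : Measure (Fin d → ℝ) :=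
  Measure.pi fun i => gaussianReal (m i) ((σ^2).toNNReal)

/-- The standard normal cumulative distribution function `Φ`. -/
noncomputable def Phi (x : ℝ) : ℝ := ((gaussianReal 0 1) (Set.Iic x)).toReal

/-- The `ℓp` norm on `ℝ^d` for `p ∈ [1,∞]` (as an extended real exponent). -/
noncomputable def lpnorm {d : ℕ} (p : ℝ≥0∞) (v : Fin d → ℝ) : ℝ :=
  if p = ∞ then ⨆ i, |v i| else (∑ i, |v i| ^ p.toReal) ^ (1 / p.toReal)

/-- The `ℓp` norm on `ℝ^d` for a real exponent `p ∈ [1,∞)`. -/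
noncomputable def lpR {d : ℕ} (p : ℝ) (v : Fin d → ℝ) : ℝ := (∑ i, |v i| ^ p) ^ (1/p)

/-!
A point is fooled exactly when its score `w · x + b` lies within `max w · v` of the decision
boundary, the maximum being over the admissible perturbations `v`. The score of a Gaussian point is
a real Gaussian, so each class contributes a difference of two values of `Φ`.

The maximum is a planar problem: write `w / ‖w‖ = cos θ e + sin θ n` with `e = μ₀` and `n` a unit
normal to `e`. The candidate is `v = β e + √(ε² - β²) n`, and it is optimal because `w` is a
nonnegative combination of `v` and `e`, where the coefficient of `e` vanishes unless the
constraint `e · v ≤ δ` is active.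
-/

section InnerProduct

open scoped RealInnerProductSpace

variable {E : Type*} [NormedAddCommGroup E] [InnerProductSpace ℝ E]

/-- The admissible perturbations: the ball of radius `ε` cut by the slab of half-width `δ` around
the hyperplane orthogonal to `e`. -/
def slabBall (e : E) (ε δ : ℝ) : Set E := {v | ‖v‖ ≤ ε ∧ |⟪v, e⟫| ≤ δ}

/-- The quantity `β` of the paper, as a function of `c = cos θ`: the `e`-component of an optimal
perturbation in `slabBall e ε δ` against a weight at angle `θ ≤ π / 2` to `e`. -/
noncomputable def alignedBudget (ε δ c : ℝ) : ℝ := min (ε * c) δ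

/-- The quantity `g(ε, δ, θ)` of the paper, as a function of `c = cos θ`: the support function of
`slabBall e ε δ` at a unit vector at angle `θ ≤ π / 2` to `e`. -/
noncomputable def attackGain (ε δ c : ℝ) : ℝ :=
  alignedBudget ε δ c * c + √(ε ^ 2 - alignedBudget ε δ c ^ 2) * √(1 - c ^ 2)

variable {ε δ c : ℝ}

lemma alignedBudget_nonneg (hε : 0 ≤ ε) (hδ : 0 ≤ δ) (hc : 0 ≤ c) : 0 ≤ alignedBudget ε δ c :=
  le_min (by positivity) hδ

lemma alignedBudget_sq_le (hε : 0 ≤ ε) (hδ : 0 ≤ δ) (hc : 0 ≤ c) :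
    alignedBudget ε δ c ^ 2 ≤ ε ^ 2 * c ^ 2 := by
  rw [← mul_pow]
  exact pow_le_pow_left₀ (alignedBudget_nonneg hε hδ hc) (min_le_left _ _) 2

lemma alignedBudget_sq_le_sq (hε : 0 ≤ ε) (hδ : 0 ≤ δ) (hc : 0 ≤ c) (hc₁ : c ≤ 1) :
    alignedBudget ε δ c ^ 2 ≤ ε ^ 2 :=
  (alignedBudget_sq_le hε hδ hc).trans <|
    mul_le_of_le_one_right (sq_nonneg ε) (pow_le_one₀ hc hc₁)

lemma mul_sqrt_one_sub_sq_le_sqrt (hε : 0 ≤ ε) (hδ : 0 ≤ δ) (hc : 0 ≤ c) :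
    ε * √(1 - c ^ 2) ≤ √(ε ^ 2 - alignedBudget ε δ c ^ 2) := by
  rw [← Real.sqrt_sq hε, ← Real.sqrt_mul (sq_nonneg ε), Real.sqrt_sq hε]
  exact Real.sqrt_le_sqrt (by linarith [alignedBudget_sq_le hε hδ hc])

lemma attackGain_nonneg (hε : 0 ≤ ε) (hδ : 0 ≤ δ) (hc : 0 ≤ c) : 0 ≤ attackGain ε δ c := by
  have := alignedBudget_nonneg hε hδ hc
  unfold attackGain
  positivity

/- The parenthesis is the multiplier of the constraint `⟪v, e⟫ ≤ δ`: it vanishes if `β = ε * c`, and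
is nonnegative if the constraint is active, `β = δ`. -/
lemma alignedBudget_complementary_slackness (hε : 0 ≤ ε) (hδ : 0 ≤ δ) (hc : 0 ≤ c) {a : ℝ}
    (ha : a ≤ δ) :
    (√(ε ^ 2 - alignedBudget ε δ c ^ 2) * c - √(1 - c ^ 2) * alignedBudget ε δ c) * a ≤
      (√(ε ^ 2 - alignedBudget ε δ c ^ 2) * c - √(1 - c ^ 2) * alignedBudget ε δ c) *
        alignedBudget ε δ c := by
  rcases le_total (ε * c) δ with h | h
  · have hβ : alignedBudget ε δ c = ε * c := min_eq_left h
    have hsqrt : √(ε ^ 2 - (ε * c) ^ 2) = ε * √(1 - c ^ 2) := by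
      rw [show ε ^ 2 - (ε * c) ^ 2 = ε ^ 2 * (1 - c ^ 2) by ring, Real.sqrt_mul (sq_nonneg ε),
        Real.sqrt_sq hε]
    rw [hβ, hsqrt]
    exact le_of_eq (by ring)
  · refine mul_le_mul_of_nonneg_left (ha.trans (min_eq_right h).ge) (sub_nonneg.2 ?_)
    calc √(1 - c ^ 2) * alignedBudget ε δ c ≤ √(1 - c ^ 2) * (ε * c) := by
          gcongr
          exact min_le_left _ _
      _ = ε * √(1 - c ^ 2) * c := by ring
      _ ≤ √(ε ^ 2 - alignedBudget ε δ c ^ 2) * c := by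
          gcongr
          exact mul_sqrt_one_sub_sq_le_sqrt hε hδ hc

lemma exists_orthogonal_decomposition {u e : E} (hu : ‖u‖ = 1) (he : ‖e‖ = 1) :
    ∃ n : E, ‖n‖ ≤ 1 ∧ ⟪e, n⟫ = 0 ∧ ⟪u, n⟫ = √(1 - ⟪u, e⟫ ^ 2) ∧
      u = ⟪u, e⟫ • e + √(1 - ⟪u, e⟫ ^ 2) • n := by
  set r := u - ⟪u, e⟫ • e with hr
  have her : ⟪e, r⟫ = 0 := by
    simp [hr, inner_sub_right, real_inner_smul_right, he, real_inner_comm]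
  have hur : ⟪u, r⟫ = 1 - ⟪u, e⟫ ^ 2 := by
    rw [hr, inner_sub_right, real_inner_smul_right, real_inner_self_eq_norm_sq, hu]
    ring
  have hrr : ⟪u, r⟫ = ‖r‖ ^ 2 := by
    rw [← real_inner_self_eq_norm_sq, ← sub_eq_zero, ← inner_sub_left, hr, sub_sub_cancel,
      real_inner_smul_left, ← hr, her, mul_zero]
  have hnorm : √(1 - ⟪u, e⟫ ^ 2) = ‖r‖ := by
    rw [← hur, hrr, Real.sqrt_sq (norm_nonneg r)]
  refine ⟨‖r‖⁻¹ • r, ?_, ?_, ?_, ?_⟩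
  · simpa [norm_smul] using inv_mul_le_one
  · rw [real_inner_smul_right, her, mul_zero]
  · rw [real_inner_smul_right, hrr, hnorm, inv_mul_eq_div, sq, mul_self_div_self]
  · rcases eq_or_ne r 0 with h | h
    · simpa [h] using sub_eq_zero.1 h
    · rw [hnorm, smul_inv_smul₀ (norm_ne_zero_iff.2 h), hr, add_sub_cancel]

/-- The perturbation attaining the support function of `slabBall e ε δ` in the direction
`c • e + √(1 - c ^ 2) • n`, for `n` a unit normal to `e`. -/
noncomputable def optimalPerturbation (ε δ c : ℝ) (e n : E) : E :=
  alignedBudget ε δ c • e + √(ε ^ 2 - alignedBudget ε δ c ^ 2) • n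

lemma optimalPerturbation_mem_slabBall (hε : 0 ≤ ε) (hδ : 0 ≤ δ) (hc : 0 ≤ c) (hc₁ : c ≤ 1)
    {e n : E} (he : ‖e‖ = 1) (hn : ‖n‖ ≤ 1) (hen : ⟪e, n⟫ = 0) :
    optimalPerturbation ε δ c e n ∈ slabBall e ε δ := by
  have hh := Real.sq_sqrt (sub_nonneg.2 (alignedBudget_sq_le_sq hε hδ hc hc₁))
  refine ⟨abs_le_of_sq_le_sq' ?_ hε |>.2, ?_⟩
  · calc ‖optimalPerturbation ε δ c e n‖ ^ 2
        = alignedBudget ε δ c ^ 2 + √(ε ^ 2 - alignedBudget ε δ c ^ 2) ^ 2 * ‖n‖ ^ 2 := by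
          rw [optimalPerturbation, norm_add_sq_real]
          simp [norm_smul, inner_smul_left, inner_smul_right, hen, he, mul_pow]
      _ ≤ alignedBudget ε δ c ^ 2 + √(ε ^ 2 - alignedBudget ε δ c ^ 2) ^ 2 * 1 := by
          gcongr
          exact pow_le_one₀ (norm_nonneg n) hn
      _ = ε ^ 2 := by rw [hh]; ring
  · have : ⟪optimalPerturbation ε δ c e n, e⟫ = alignedBudget ε δ c := by
      simp [optimalPerturbation, inner_add_left, inner_smul_left, real_inner_comm, hen, he]
    rw [this, abs_of_nonneg (alignedBudget_nonneg hε hδ hc)]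
    exact min_le_right _ _

/- Up to the factor `√(ε ^ 2 - β ^ 2)`, the vector `u` is a nonnegative combination of the normals
`e` and `optimalPerturbation ε δ c e n` of the two constraints (Karush-Kuhn-Tucker). The factor
vanishes only if `β = ε`, where Cauchy-Schwarz suffices. -/
lemma inner_le_attackGain (hε : 0 ≤ ε) (hδ : 0 ≤ δ) {u e v : E} (hu : ‖u‖ = 1) (he : ‖e‖ = 1)
    (hue : 0 ≤ ⟪u, e⟫) (hv : v ∈ slabBall e ε δ) : ⟪u, v⟫ ≤ attackGain ε δ ⟪u, e⟫ := by
  obtain ⟨n, hn, hen, -, hdecomp⟩ := exists_orthogonal_decomposition hu he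
  have hue₁ : ⟪u, e⟫ ≤ 1 := by simpa [hu, he] using real_inner_le_norm u e
  set c := ⟪u, e⟫
  have hslack := alignedBudget_complementary_slackness hε hδ hue ((le_abs_self _).trans hv.2)
  have hopt : ⟪optimalPerturbation ε δ c e n, v⟫ ≤ ε ^ 2 :=
    calc _ ≤ ‖optimalPerturbation ε δ c e n‖ * ‖v‖ := real_inner_le_norm _ _
      _ ≤ ε * ε := mul_le_mul (optimalPerturbation_mem_slabBall hε hδ hue hue₁ he hn hen).1 hv.1
          (norm_nonneg v) hε
      _ = ε ^ 2 := (sq ε).symm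
  have hcomb : √(ε ^ 2 - alignedBudget ε δ c ^ 2) * ⟪u, v⟫ =
      (√(ε ^ 2 - alignedBudget ε δ c ^ 2) * c - √(1 - c ^ 2) * alignedBudget ε δ c) * ⟪v, e⟫ +
        √(1 - c ^ 2) * ⟪optimalPerturbation ε δ c e n, v⟫ := by
    rw [hdecomp, real_inner_comm e v, optimalPerturbation]
    simp only [inner_add_left, real_inner_smul_left]
    ring
  have hh := Real.sq_sqrt (sub_nonneg.2 (alignedBudget_sq_le_sq hε hδ hue hue₁))
  rcases (Real.sqrt_nonneg (ε ^ 2 - alignedBudget ε δ c ^ 2)).eq_or_lt with h | h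
  · have hβ : ε = alignedBudget ε δ c :=
      (sq_eq_sq₀ hε (alignedBudget_nonneg hε hδ hue)).1 (by rw [← h] at hh; linarith)
    calc ⟪u, v⟫ ≤ ‖u‖ * ‖v‖ := real_inner_le_norm u v
      _ ≤ ε := by rw [hu, one_mul]; exact hv.1
      _ ≤ ε * c := hβ.trans_le (min_le_left _ _)
      _ = attackGain ε δ c := by rw [attackGain, ← h, ← hβ, zero_mul, add_zero]
  · refine le_of_mul_le_mul_left ?_ h
    rw [hcomb]
    refine (add_le_add hslack (mul_le_mul_of_nonneg_left hopt (Real.sqrt_nonneg _))).trans_eq ?_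
    rw [attackGain]
    linear_combination -√(1 - c ^ 2) * hh

lemma isGreatest_inner_slabBall_of_norm_eq_one (hε : 0 ≤ ε) (hδ : 0 ≤ δ) {u e : E} (hu : ‖u‖ = 1)
    (he : ‖e‖ = 1) (hue : 0 ≤ ⟪u, e⟫) :
    IsGreatest ((fun v ↦ ⟪u, v⟫) '' slabBall e ε δ) (attackGain ε δ ⟪u, e⟫) := by
  have hue₁ : ⟪u, e⟫ ≤ 1 := by simpa [hu, he] using real_inner_le_norm u e
  obtain ⟨n, hn, hen, hun, -⟩ := exists_orthogonal_decomposition hu he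
  refine ⟨⟨optimalPerturbation ε δ ⟪u, e⟫ e n,
    optimalPerturbation_mem_slabBall hε hδ hue hue₁ he hn hen, ?_⟩,
    Set.forall_mem_image.2 fun v hv ↦ inner_le_attackGain hε hδ hu he hue hv⟩
  simp only [optimalPerturbation, inner_add_right, real_inner_smul_right, hun, attackGain]

lemma isGreatest_inner_slabBall (hε : 0 ≤ ε) (hδ : 0 ≤ δ) {w e : E} (hw : w ≠ 0) (he : ‖e‖ = 1)
    (hwe : 0 ≤ ⟪w, e⟫) :
    IsGreatest ((fun v ↦ ⟪w, v⟫) '' slabBall e ε δ) (‖w‖ * attackGain ε δ (⟪w, e⟫ / ‖w‖)) := by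
  have hinner (v : E) : ⟪‖w‖⁻¹ • w, v⟫ = ⟪w, v⟫ / ‖w‖ := by
    rw [real_inner_smul_left, inv_mul_eq_div]
  have hunit := isGreatest_inner_slabBall_of_norm_eq_one hε hδ (norm_smul_inv_norm (𝕜 := ℝ) hw) he
    ((div_nonneg hwe (norm_nonneg w)).trans_eq (hinner e).symm)
  simpa only [RCLike.ofReal_real_eq_id, id_eq, hinner, Set.image_image,
    mul_div_cancel₀ _ (norm_ne_zero_iff.2 hw)] using
    (monotone_mul_left_of_nonneg (norm_nonneg w)).map_isGreatest hunit

end InnerProduct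

section Coordinates

variable {d : ℕ}

lemma dotp_add (w x y : Fin d → ℝ) : dotp w (x + y) = dotp w x + dotp w y := dotProduct_add w x y

lemma dotp_sub (w x y : Fin d → ℝ) : dotp w (x - y) = dotp w x - dotp w y := dotProduct_sub w x y

lemma dotp_neg (w x : Fin d → ℝ) : dotp w (-x) = -dotp w x := dotProduct_neg w x

lemma dotp_eq_inner (w x : Fin d → ℝ) : dotp w x = inner ℝ (WithLp.toLp 2 w) (WithLp.toLp 2 x) := by
  simp [dotp, PiLp.inner_apply, mul_comm]

lemma l2_eq_norm (v : Fin d → ℝ) : l2 v = ‖WithLp.toLp 2 v‖ := by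
  simp [l2, EuclideanSpace.norm_eq]

lemma l2_sq (v : Fin d → ℝ) : l2 v ^ 2 = ∑ i, v i ^ 2 := Real.sq_sqrt (by positivity)

lemma l2_pos {v : Fin d → ℝ} (hv : v ≠ 0) : 0 < l2 v := by
  rw [l2_eq_norm, norm_pos_iff]
  simpa using hv

lemma l2_inv_l2_smul {v : Fin d → ℝ} (hv : v ≠ 0) : l2 ((l2 v)⁻¹ • v) = 1 := by
  rw [l2_eq_norm, WithLp.toLp_smul, norm_smul, ← l2_eq_norm, norm_inv,
    Real.norm_of_nonneg (l2_pos hv).le, inv_mul_cancel₀ (l2_pos hv).ne']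

lemma isGreatest_dotp {ε δ : ℝ} (hε : 0 ≤ ε) (hδ : 0 ≤ δ) {w e : Fin d → ℝ} (hw : w ≠ 0)
    (he : l2 e = 1) (hwe : 0 ≤ dotp w e) :
    IsGreatest (dotp w '' {v | l2 v ≤ ε ∧ |dotp v e| ≤ δ})
      (l2 w * attackGain ε δ (dotp w e / l2 w)) := by
  have himage : dotp w '' {v | l2 v ≤ ε ∧ |dotp v e| ≤ δ} =
      (fun v ↦ inner ℝ (WithLp.toLp 2 w) v) '' slabBall (WithLp.toLp 2 e) ε δ := by
    simp only [Set.image, slabBall, Set.mem_ofPred_eq, dotp_eq_inner, l2_eq_norm,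
      (WithLp.toLp_surjective 2).exists]
  rw [himage, dotp_eq_inner, l2_eq_norm]
  rw [dotp_eq_inner] at hwe
  rw [l2_eq_norm] at he
  exact isGreatest_inner_slabBall hε hδ (by simpa using hw) he hwe

lemma isLeast_dotp_image_neg {w : Fin d → ℝ} {V : Set (Fin d → ℝ)} {a : ℝ}
    (hV : ∀ v ∈ V, -v ∈ V) (ha : IsGreatest (dotp w '' V) a) : IsLeast (dotp w '' V) (-a) := by
  obtain ⟨⟨v₀, hv₀, rfl⟩, hmax⟩ := ha
  refine ⟨⟨-v₀, hV v₀ hv₀, dotp_neg w v₀⟩, Set.forall_mem_image.2 fun v hv ↦ ?_⟩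
  have : dotp w (-v) ≤ dotp w v₀ := hmax (Set.mem_image_of_mem _ (hV v hv))
  rw [dotp_neg] at this
  exact neg_le.1 this

end Coordinates

section Gaussian

lemma map_sum_mul_pi_gaussianReal {ι : Type*} [Fintype ι] (m w : ι → ℝ) (v : ι → ℝ≥0) :
    (Measure.pi fun i ↦ gaussianReal (m i) (v i)).map (fun x ↦ ∑ i, w i * x i) =
      gaussianReal (∑ i, w i * m i) (∑ i, (w i ^ 2).toNNReal * v i) := by
  have hmeas : Measurable fun x : ι → ℝ ↦ ∑ i, w i * x i := by fun_prop
  refine Measure.ext_of_charFun (funext fun t ↦ ?_)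
  rw [charFun_apply_real, integral_map hmeas.aemeasurable (by fun_prop), charFun_gaussianReal]
  calc _ = ∫ x, ∏ i, Complex.exp ((t * w i : ℝ) * x i * Complex.I)
        ∂(Measure.pi fun i ↦ gaussianReal (m i) (v i)) := by
        congr with x
        rw [← Complex.exp_sum]
        push_cast [Finset.mul_sum, Finset.sum_mul]
        simp only [mul_assoc]
    _ = ∏ i, charFun (gaussianReal (m i) (v i)) (t * w i) := by
        simp only [charFun_apply_real]
        exact integral_fintype_prod_eq_prod
          fun i (y : ℝ) ↦ Complex.exp ((t * w i : ℝ) * y * Complex.I)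
    _ = _ := by
        simp only [charFun_gaussianReal, ← Complex.exp_sum, Finset.sum_sub_distrib]
        push_cast [Finset.mul_sum, Finset.sum_mul, Finset.sum_div,
          Real.coe_toNNReal _ (sq_nonneg _)]
        congr! 4 <;> ring

lemma gaussianReal_real_Iic (m t : ℝ) {s : ℝ} (hs : 0 < s) :
    (gaussianReal m (s ^ 2).toNNReal).real (Set.Iic t) = Phi ((t - m) / s) := by
  have hstd : (gaussianReal m (s ^ 2).toNNReal).map (fun x ↦ (x - m) / s) = gaussianReal 0 1 := by
    rw [← Function.comp_def (fun x ↦ x / s) (fun x ↦ x - m),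
      ← Measure.map_map (by fun_prop) (by fun_prop), gaussianReal_map_sub_const,
      gaussianReal_map_div_const, sub_self, zero_div]
    congr 1
    ext
    simp only [NNReal.coe_div, NNReal.coe_mk, NNReal.coe_one, Real.coe_toNNReal _ (sq_nonneg s)]
    exact div_self (pow_ne_zero 2 hs.ne')
  rw [Phi, ← hstd, Measure.map_apply (by fun_prop) measurableSet_Iic, measureReal_def]
  congr 2
  ext x
  simp [div_le_div_iff_of_pos_right hs]

lemma Phi_neg (x : ℝ) : Phi (-x) = 1 - Phi x := by
  have := nullSingletonClass_gaussianReal (μ := 0) one_ne_zero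
  calc Phi (-x) = ((gaussianReal 0 1).map fun y ↦ -y).real (Set.Iic (-x)) := by
        rw [gaussianReal_map_neg, neg_zero, Phi, measureReal_def]
    _ = (gaussianReal 0 1).real (Set.Ici x) := by
        rw [map_measureReal_apply measurable_neg measurableSet_Iic]
        congr 1
        ext
        simp
    _ = (gaussianReal 0 1).real (Set.Iic x)ᶜ := by
        rw [Set.compl_Iic, measureReal_congr Ioi_ae_eq_Ici]
    _ = 1 - Phi x := probReal_compl_eq_one_sub measurableSet_Iic

variable {d : ℕ}

lemma gaussPi_map_dotp (m w : Fin d → ℝ) (σ : ℝ) :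
    (gaussPi m σ).map (dotp w) = gaussianReal (dotp w m) ((l2 w * σ) ^ 2).toNNReal := by
  refine (map_sum_mul_pi_gaussianReal m w fun _ ↦ (σ ^ 2).toNNReal).trans ?_
  rw [← Finset.sum_mul, ← Real.toNNReal_sum_of_nonneg fun _ _ ↦ sq_nonneg _, ← l2_sq, mul_pow,
    Real.toNNReal_mul (sq_nonneg _), dotp]

lemma gaussPi_real_dotp_preimage_Ioc (m : Fin d → ℝ) {w : Fin d → ℝ} (hw : w ≠ 0) {σ : ℝ}
    (hσ : 0 < σ) {l u : ℝ} (hlu : l ≤ u) :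
    (gaussPi m σ).real (dotp w ⁻¹' Set.Ioc l u) =
      Phi ((u - dotp w m) / (l2 w * σ)) - Phi ((l - dotp w m) / (l2 w * σ)) := by
  have hmeas : Measurable (dotp w) := by unfold dotp; fun_prop
  have hscale : 0 < l2 w * σ := mul_pos (l2_pos hw) hσ
  rw [← map_measureReal_apply hmeas measurableSet_Ioc, gaussPi_map_dotp, ← Set.Iic_sdiff_Iic,
    measureReal_sdiff (Set.Iic_subset_Iic.2 hlu) measurableSet_Iic,
    gaussianReal_real_Iic _ _ hscale, gaussianReal_real_Iic _ _ hscale]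

end Gaussian

section LinearClassifier

variable {d : ℕ} {w : Fin d → ℝ} {σ G : ℝ} {V : Set (Fin d → ℝ)}

lemma exists_perturbed_score_nonpos_iff {L : ℝ} (hV : IsLeast (dotp w '' V) (-L)) (x : Fin d → ℝ)
    (b : ℝ) : (∃ v ∈ V, dotp w (x + v) + b ≤ 0) ↔ dotp w x + b ≤ L := by
  obtain ⟨⟨v₀, hv₀, hwv₀⟩, hmin⟩ := hV
  simp only [dotp_add]
  constructor
  · rintro ⟨v, hv, hxv⟩
    linarith [hmin (Set.mem_image_of_mem _ hv)]
  · intro hx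
    exact ⟨v₀, hv₀, by linarith⟩

lemma exists_perturbed_score_pos_iff {L : ℝ} (hV : IsGreatest (dotp w '' V) L) (x : Fin d → ℝ)
    (b : ℝ) : (∃ v ∈ V, 0 < dotp w (x + v) + b) ↔ -L < dotp w x + b := by
  obtain ⟨⟨v₀, hv₀, hwv₀⟩, hmax⟩ := hV
  simp only [dotp_add]
  constructor
  · rintro ⟨v, hv, hxv⟩
    linarith [hmax (Set.mem_image_of_mem _ hv)]
  · intro hx
    exact ⟨v₀, hv₀, by linarith⟩

lemma gaussPi_real_positive_adversarial (m : Fin d → ℝ) (hw : w ≠ 0) (hσ : 0 < σ) (hG : 0 ≤ G)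
    (hV : IsLeast (dotp w '' V) (-(l2 w * G))) (b : ℝ) :
    (gaussPi m σ).real {x | 0 < dotp w x + b ∧ ∃ v ∈ V, dotp w (x + v) + b ≤ 0} =
      Phi ((dotp w m + b) / (l2 w * σ)) - Phi ((dotp w m + b) / (l2 w * σ) - G / σ) := by
  have hl2 := l2_pos hw
  have hset : {x | 0 < dotp w x + b ∧ ∃ v ∈ V, dotp w (x + v) + b ≤ 0} =
      dotp w ⁻¹' Set.Ioc (-b) (l2 w * G - b) := by
    ext x
    simp only [exists_perturbed_score_nonpos_iff hV, Set.mem_ofPred_eq, Set.mem_preimage,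
      Set.mem_Ioc, neg_lt_iff_pos_add, le_sub_iff_add_le]
  have hleft : (-b - dotp w m) / (l2 w * σ) = -((dotp w m + b) / (l2 w * σ)) := by ring
  have hright : (l2 w * G - b - dotp w m) / (l2 w * σ) =
      -((dotp w m + b) / (l2 w * σ) - G / σ) := by
    field_simp
    ring
  rw [hset, gaussPi_real_dotp_preimage_Ioc m hw hσ (by linarith [mul_nonneg hl2.le hG]), hleft,
    hright, Phi_neg, Phi_neg]
  ring

lemma gaussPi_real_negative_adversarial (m : Fin d → ℝ) (hw : w ≠ 0) (hσ : 0 < σ) (hG : 0 ≤ G)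
    (hV : IsGreatest (dotp w '' V) (l2 w * G)) (b : ℝ) :
    (gaussPi m σ).real {x | dotp w x + b ≤ 0 ∧ ∃ v ∈ V, 0 < dotp w (x + v) + b} =
      Phi (-(dotp w m + b) / (l2 w * σ)) - Phi (-(dotp w m + b) / (l2 w * σ) - G / σ) := by
  have hl2 := l2_pos hw
  have hset : {x | dotp w x + b ≤ 0 ∧ ∃ v ∈ V, 0 < dotp w (x + v) + b} =
      dotp w ⁻¹' Set.Ioc (-(l2 w * G) - b) (-b) := by
    ext x
    simp only [exists_perturbed_score_pos_iff hV, Set.mem_ofPred_eq, Set.mem_preimage,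
      Set.mem_Ioc, sub_lt_iff_lt_add, le_neg_iff_add_nonpos_right]
    exact and_comm
  have hleft : (-(l2 w * G) - b - dotp w m) / (l2 w * σ) =
      -(dotp w m + b) / (l2 w * σ) - G / σ := by
    field_simp
    ring
  have hright : -b - dotp w m = -(dotp w m + b) := by ring
  rw [hset, gaussPi_real_dotp_preimage_Ioc m hw hσ (by linarith [mul_nonneg hl2.le hG]), hleft,
    hright]

end LinearClassifier

/-- Theorem 2: the overall strong-adversarial rate of a linear
classifier for balanced Gaussian mixture data. -/
theorem strong_adversarial_rate {d : ℕ} (hd : 1 ≤ d)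
    (w : Fin d → ℝ) (hw : w ≠ 0) (b ε δ : ℝ) (hε : 0 < ε) (hδ : 0 ≤ δ)
    (μp μm : Fin d → ℝ) (σ : ℝ) (hσ : 0 < σ)
    (μ μbar μ₀ : Fin d → ℝ) (b' : ℝ)
    (hμ : μ = (1/2 : ℝ) • (μp - μm)) (hμne : μ ≠ 0) (hμ₀ : μ₀ = (l2 μ)⁻¹ • μ)
    (hμbar : μbar = (1/2 : ℝ) • (μp + μm)) (hb' : b' = dotp w μbar + b)
    (hwμ₀ : 0 ≤ dotp w μ₀)
    (cosθ sinθ β g : ℝ)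
    (hcos : cosθ = dotp w μ₀ / l2 w)
    (hsin : sinθ = Real.sqrt (1 - cosθ^2))
    (hβ : β = min (ε * cosθ) δ)
    (hg : g = β * cosθ + Real.sqrt (ε^2 - β^2) * sinθ)
    (psadv pm : ℝ)
    (hpsadv : psadv =
        (1/2) * ((gaussPi μp σ) {x : Fin d → ℝ | 0 < dotp w x + b ∧
            ∃ v : Fin d → ℝ, l2 v ≤ ε ∧ |dotp v μ₀| ≤ δ ∧ dotp w (x + v) + b ≤ 0}).toReal
      + (1/2) * ((gaussPi μm σ) {x : Fin d → ℝ | dotp w x + b ≤ 0 ∧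
            ∃ v : Fin d → ℝ, l2 v ≤ ε ∧ |dotp v μ₀| ≤ δ ∧ 0 < dotp w (x + v) + b}).toReal)
    (hpm : pm = 1 - (1/2) * (Phi ((dotp w μ + b') / (l2 w * σ)) +
                              Phi ((dotp w μ - b') / (l2 w * σ)))) :
    psadv = 1 - pm - (1/2) * (Phi ((dotp w μ + b') / (l2 w * σ) - g / σ) +
                               Phi ((dotp w μ - b') / (l2 w * σ) - g / σ)) := by
  have hgain : attackGain ε δ (dotp w μ₀ / l2 w) = g := by
    rw [hg, hsin, hβ, hcos, attackGain, alignedBudget]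
  have hg₀ : 0 ≤ g := hgain ▸ attackGain_nonneg hε.le hδ (div_nonneg hwμ₀ (l2_pos hw).le)
  have hmax := hgain ▸ isGreatest_dotp hε.le hδ hw (hμ₀ ▸ l2_inv_l2_smul hμne) hwμ₀
  have hmin := isLeast_dotp_image_neg (fun v hv ↦ by simpa [l2, dotp] using hv) hmax
  have hscorep : dotp w μp + b = dotp w μ + b' := by
    rw [show μp = μ + μbar by rw [hμ, hμbar]; module, dotp_add, hb', add_assoc]
  have hscorem : -(dotp w μm + b) = dotp w μ - b' := by
    rw [show μm = μbar - μ by rw [hμ, hμbar]; module, dotp_sub, hb']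
    ring
  have hpos := gaussPi_real_positive_adversarial μp hw hσ hg₀ hmin b
  have hneg := gaussPi_real_negative_adversarial μm hw hσ hg₀ hmax b
  simp only [measureReal_def, Set.mem_ofPred_eq, and_assoc, hscorep] at hpos
  simp only [measureReal_def, Set.mem_ofPred_eq, and_assoc, hscorem] at hneg
  rw [hpsadv, hpos, hneg, hpm]
  ring
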